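/- For every $n\ge1$ and real $t$: $\mathrm{Im}\big(A_n\overline{B_n}\big)=\sum_{r=0}^{n-1} t^{2r+1}N_r(n)$, where $N_r(n)=\sum_{1\le k\le l\le n}R_1^k\,2^{(k,l)}\,\rho_l\,\theta^lK_r(n-l)$, with $2^{(k,l)}=2$ if $k\ne l$ and $1$ if $k=l$. -/

import Mathlib

open scoped Classical

/-- `ρ 0 = 1`, `ρ n = a 1 ⋯ a n`. -/
noncomputable def rho (a : ℕ → ℝ) (n : ℕ) : ℝ := ∏ k ∈ Finset.Icc 1 n, a k

/-- `R_k^l = ∑_{s=k}^l η s · ρ l / ρ s`. -/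
noncomputable def Rkl (a η : ℕ → ℝ) (k l : ℕ) : ℝ :=
  ∑ s ∈ Finset.Icc k l, η s * (rho a l / rho a s)

/-- `T_k^l = (R_k^l)² ρ (k-1) / ρ l`. -/
noncomputable def Tkl (a η : ℕ → ℝ) (k l : ℕ) : ℝ :=
  (Rkl a η k l) ^ 2 * (rho a (k - 1) / rho a l)

/-- `Δ_r^n = ∑_{1 ≤ k₁ < ⋯ < k_r ≤ n} R_1^{k₁} R_{k₁+1}^{k₂} ⋯ R_{k_{r-1}+1}^{k_r}`
(`Δ_0^n = 1`, and `Δ_r^n = 0` for `r > n`). -/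
noncomputable def Delta (a η : ℕ → ℝ) (r n : ℕ) : ℝ :=
  ∑ k ∈ (Fintype.piFinset fun _ : Fin r => Finset.Icc 1 n).filter
      (fun k => ∀ i j : Fin r, i < j → k i < k j),
    ∏ i : Fin r, Rkl a η (if (i : ℕ) = 0 then 1 else k ⟨(i : ℕ) - 1, Nat.lt_of_le_of_lt (Nat.sub_le _ _) i.isLt⟩ + 1) (k i)

/-- `K_r(n) = ∑_{p=-r}^r (-1)^p Δ_{r+p}^n Δ_{r-p}^n`. -/
noncomputable def Kr (a η : ℕ → ℝ) (r n : ℕ) : ℝ :=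
  ∑ p ∈ Finset.Icc (-(r : ℤ)) (r : ℤ),
    (-1 : ℝ) ^ p * Delta a η ((r : ℤ) + p).toNat n * Delta a η ((r : ℤ) - p).toNat n

/-- Shift of the data: `θ^j` replaces `(a k, η k)` by `(a (k+j), η (k+j))`. -/
def shift (f : ℕ → ℝ) (j : ℕ) : ℕ → ℝ := fun k => f (k + j)


lemma rho_zero (a : ℕ → ℝ) : rho a 0 = 1 := by simp [rho]

lemma rho_succ (a : ℕ → ℝ) (n : ℕ) : rho a (n + 1) = rho a n * a (n + 1) := by
  unfold rho
  rw [Finset.prod_Icc_succ_top (by omega)]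

lemma rho_pos (a : ℕ → ℝ) (ha : ∀ k : ℕ, 1 ≤ k → 0 < a k) (n : ℕ) : 0 < rho a n :=
  Finset.prod_pos fun k hk => ha k (Finset.mem_Icc.1 hk).1

lemma shift_pos (a : ℕ → ℝ) (ha : ∀ k : ℕ, 1 ≤ k → 0 < a k) (l : ℕ) :
    ∀ k : ℕ, 1 ≤ k → 0 < shift a l k := fun k hk => ha (k + l) (by omega)

lemma shift_shift (a : ℕ → ℝ) (l k : ℕ) : shift (shift a l) k = shift a (l + k) := by
  funext j
  simp only [shift]
  congr 1
  omega

lemma rho_add (a : ℕ → ℝ) (l n : ℕ) : rho a (n + l) = rho a l * rho (shift a l) n := by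
  induction n with
  | zero => simp [rho_zero]
  | succ n ih =>
    rw [show n + 1 + l = (n + l) + 1 by ring, rho_succ, ih, rho_succ]
    simp only [shift]
    rw [show n + 1 + l = (n + l) + 1 by ring]
    ring

lemma Rkl_shift (a η : ℕ → ℝ) (ha : ∀ k : ℕ, 1 ≤ k → 0 < a k) (l p q : ℕ) :
    Rkl a η (p + l) (q + l) = Rkl (shift a l) (shift η l) p q := by
  unfold Rkl
  rw [← Finset.image_add_right_Icc, Finset.sum_image (by intro x _ y _ h; simpa using h)]
  refine Finset.sum_congr rfl fun s _ => ?_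
  rw [rho_add, rho_add, mul_div_mul_left _ _ (rho_pos a ha l).ne']
  rfl

lemma Rkl_zero (a η : ℕ → ℝ) : Rkl a η 1 0 = 0 := by simp [Rkl]

lemma Rkl_succ (a η : ℕ → ℝ) (ha : ∀ k : ℕ, 1 ≤ k → 0 < a k) (m : ℕ) :
    Rkl a η 1 (m + 1) = a (m + 1) * Rkl a η 1 m + η (m + 1) := by
  unfold Rkl
  rw [Finset.sum_Icc_succ_top (by omega), div_self (rho_pos a ha _).ne', Finset.mul_sum, mul_one]
  congr 1
  refine Finset.sum_congr rfl fun s _ => ?_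
  rw [rho_succ]
  ring

lemma Rkl_front (a η : ℕ → ℝ) (ha : ∀ k : ℕ, 1 ≤ k → 0 < a k) (m : ℕ) :
    Rkl a η 1 (m + 1) = η 1 * rho (shift a 1) m + Rkl (shift a 1) (shift η 1) 1 m := by
  induction m with
  | zero => rw [Rkl_succ a η ha, Rkl_zero, Rkl_zero, rho_zero]; simp
  | succ m ih =>
    rw [Rkl_succ a η ha, ih, Rkl_succ _ _ (shift_pos a ha 1), rho_succ]
    simp only [shift]
    ring

lemma Delta_zero (a η : ℕ → ℝ) (n : ℕ) : Delta a η 0 n = 1 := by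
  simp [Delta]

lemma Delta_succ (a η : ℕ → ℝ) (ha : ∀ k : ℕ, 1 ≤ k → 0 < a k) (r n : ℕ) :
    Delta a η (r + 1) n = ∑ k ∈ Finset.Icc 1 n,
      Rkl a η 1 k * Delta (shift a k) (shift η k) r (n - k) := by
  unfold Delta
  simp only [Finset.mul_sum]
  rw [Finset.sum_sigma']
  symm
  refine Finset.sum_bij'
    (fun p _ => (Fin.cons p.1 (fun i => p.2 i + p.1) : Fin (r + 1) → ℕ))
    (fun k _ => ⟨k 0, fun i => k i.succ - k 0⟩) ?_ ?_ ?_ ?_ ?_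
  · rintro ⟨k0, k⟩ h
    simp only [Finset.mem_sigma, Finset.mem_filter, Fintype.mem_piFinset, Finset.mem_Icc] at h ⊢
    obtain ⟨h0, h1, h2⟩ := h
    constructor
    · intro i
      refine Fin.cases ?_ (fun i => ?_) i
      · simpa using h0
      · have := h1 i
        simp only [Fin.cons_succ]
        omega
    · intro i j
      refine Fin.cases ?_ (fun i => ?_) i <;> refine Fin.cases ?_ (fun j => ?_) j
      · simp
      · intro _
        have := h1 j
        simp only [Fin.cons_succ, Fin.cons_zero]
        omega
      · intro h; simp at h
      · intro h
        have := h2 i j (by simpa using h)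
        simp only [Fin.cons_succ]
        omega
  · intro k h
    simp only [Finset.mem_sigma, Finset.mem_filter, Fintype.mem_piFinset, Finset.mem_Icc] at h ⊢
    obtain ⟨h1, h2⟩ := h
    refine ⟨h1 0, fun i => ?_, fun i j hij => ?_⟩
    · have := h1 i.succ
      have := h2 0 i.succ (Fin.succ_pos i)
      omega
    · have := h2 i.succ j.succ (by simpa using hij)
      have := h2 0 i.succ (Fin.succ_pos i)
      omega
  · rintro ⟨k0, k⟩ h
    simp
  · intro k h
    simp only [Finset.mem_filter, Fintype.mem_piFinset, Finset.mem_Icc] at h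
    obtain ⟨h1, h2⟩ := h
    funext i
    refine Fin.cases ?_ (fun i => ?_) i
    · simp
    · have := h2 0 i.succ (Fin.succ_pos i)
      simp only [Fin.cons_succ]
      omega
  · rintro ⟨k0, k⟩ h
    simp only [Fin.prod_univ_succ (n := r)]
    congr 1
    refine Finset.prod_congr rfl fun i _ => ?_
    rw [← Rkl_shift a η ha]
    simp only [Fin.val_succ, Fin.cons_succ, Nat.add_eq_zero_iff, one_ne_zero, and_false, if_false]
    congr 1
    rcases i with ⟨i, hi⟩
    cases i with
    | zero =>
      have : (⟨0 + 1 - 1, by omega⟩ : Fin (r + 1)) = 0 := rfl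
      simp
      omega
    | succ i =>
      have : (⟨i + 1 + 1 - 1, by omega⟩ : Fin (r + 1)) = Fin.succ ⟨i, by omega⟩ := rfl
      simp only [this, Fin.cons_succ]
      simp
      omega

lemma Delta_eq_zero (r : ℕ) : ∀ (a η : ℕ → ℝ) (_ : ∀ k : ℕ, 1 ≤ k → 0 < a k) (n : ℕ), n < r →
    Delta a η r n = 0 := by
  induction r with
  | zero => intro a η ha n hn; omega
  | succ r ih =>
    intro a η ha n hn
    rw [Delta_succ a η ha]
    refine Finset.sum_eq_zero fun k hk => ?_
    rw [Finset.mem_Icc] at hk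
    rw [ih _ _ (shift_pos a ha k) _ (by omega), mul_zero]

/-- `β n = b n - i t η n`. -/
noncomputable def betaC (a η : ℕ → ℝ) (t : ℝ) (n : ℕ) : ℂ :=
  ((1 + a n : ℝ) : ℂ) - Complex.I * (t : ℂ) * ((η n : ℝ) : ℂ)

/-- `Yc m l` is the shifted denominator `θ^l B_m`. -/
noncomputable def Yc (a η : ℕ → ℝ) (t : ℝ) : ℕ → ℕ → ℂ
  | 0, _ => 1
  | 1, l => betaC a η t (l + 1)
  | m + 2, l => betaC a η t (l + 1) * Yc a η t (m + 1) (l + 1)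
      - (a (l + 2) : ℂ) * Yc a η t m (l + 2)

/-- `Xc m l` is `θ^l (B_m - A_m)`. -/
noncomputable def Xc (a η : ℕ → ℝ) (t : ℝ) : ℕ → ℕ → ℂ
  | 0, _ => 1
  | m + 1, l => Yc a η t (m + 1) l - (a (l + 1) : ℂ) * Yc a η t m (l + 1)

lemma Yc_back (a η : ℕ → ℝ) (t : ℝ) (m : ℕ) : ∀ l,
    Yc a η t (m + 2) l = betaC a η t (l + m + 2) * Yc a η t (m + 1) l
      - (a (l + m + 2) : ℂ) * Yc a η t m l := by
  induction m using Nat.strong_induction_on with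
  | _ m ih =>
    intro l
    match m with
    | 0 => simp only [Yc, zero_add, add_zero]; ring_nf
    | 1 =>
      rw [Yc, ih 0 (by omega)]
      simp only [Yc, zero_add, add_zero]; ring_nf
    | m + 2 =>
      rw [Yc, ih (m + 1) (by omega) (l + 1), ih m (by omega) (l + 2), Yc, Yc]
      rw [show l + 1 + (m + 1) + 2 = l + (m + 2) + 2 by ring,
        show l + 2 + m + 2 = l + (m + 2) + 2 by ring]
      simp only [Yc]
      ring

lemma Xc_succ (a η : ℕ → ℝ) (t : ℝ) (m l : ℕ) :
    Xc a η t (m + 1) l = Xc a η t m (l + 1)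
      - Complex.I * t * (η (l + 1) : ℂ) * Yc a η t m (l + 1) := by
  cases m with
  | zero => simp only [Xc, Yc, betaC, zero_add]; push_cast; ring
  | succ m => simp only [Xc, Yc, betaC]; push_cast; ring

lemma Yc_sum (a η : ℕ → ℝ) (t : ℝ) (m : ℕ) : ∀ l,
    Yc a η t m l = ∑ j ∈ Finset.range (m + 1), (rho (shift a l) j : ℂ) * Xc a η t (m - j) (l + j) := by
  induction m with
  | zero => intro l; simp [Yc, Xc, rho_zero]
  | succ m ih =>
    intro l
    rw [Finset.sum_range_succ']
    have : Yc a η t (m + 1) l = Xc a η t (m + 1) l + (a (l + 1) : ℂ) * Yc a η t m (l + 1) := by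
      rw [Xc]; ring
    rw [this, ih, rho_zero, Finset.mul_sum, add_comm]
    congr 1
    · refine Finset.sum_congr rfl fun j _ => ?_
      have h := rho_add (shift a l) 1 j
      rw [shift_shift, show rho (shift a l) 1 = a (l + 1) by
        rw [rho_succ, rho_zero]; simp [shift, add_comm]] at h
      rw [h, show m + 1 - (j + 1) = m - j by omega, show l + (j + 1) = l + 1 + j by ring]
      push_cast; ring
    · simp

lemma Xc_sum (a η : ℕ → ℝ) (ha : ∀ k : ℕ, 1 ≤ k → 0 < a k) (t : ℝ) (m : ℕ) : ∀ l,
    Xc a η t m l = 1 - Complex.I * t * ∑ k ∈ Finset.range (m + 1),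
      (Rkl (shift a l) (shift η l) 1 k : ℂ) * Xc a η t (m - k) (l + k) := by
  induction m with
  | zero => intro l; simp [Xc, Rkl_zero]
  | succ m ih =>
    intro l
    rw [Finset.sum_range_succ', Rkl_zero, Xc_succ, ih (l + 1), Yc_sum]
    have : ∑ k ∈ Finset.range (m + 1), (Rkl (shift a l) (shift η l) 1 (k + 1) : ℂ)
          * Xc a η t (m + 1 - (k + 1)) (l + (k + 1))
        = (η (l + 1) : ℂ) * (∑ j ∈ Finset.range (m + 1),
            (rho (shift a (l + 1)) j : ℂ) * Xc a η t (m - j) (l + 1 + j))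
          + ∑ k ∈ Finset.range (m + 1),
            (Rkl (shift a (l + 1)) (shift η (l + 1)) 1 k : ℂ) * Xc a η t (m - k) (l + 1 + k) := by
      rw [Finset.mul_sum, ← Finset.sum_add_distrib]
      refine Finset.sum_congr rfl fun k _ => ?_
      rw [Rkl_front _ _ (shift_pos a ha l), shift_shift, shift_shift,
        show m + 1 - (k + 1) = m - k by omega, show l + (k + 1) = l + 1 + k by ring,
        show shift η l 1 = η (l + 1) by simp [shift, add_comm]]
      push_cast; ring
    rw [this]
    push_cast; ring

lemma Xc_Delta (a η : ℕ → ℝ) (ha : ∀ k : ℕ, 1 ≤ k → 0 < a k) (t : ℝ) (m : ℕ) : ∀ l N, m < N →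
    ∑ r ∈ Finset.range N, (-(Complex.I * t)) ^ r * (Delta (shift a l) (shift η l) r m : ℂ)
      = Xc a η t m l := by
  induction m using Nat.strong_induction_on with
  | _ m ih =>
    intro l N hN
    obtain ⟨N, rfl⟩ : ∃ M, N = M + 1 := ⟨N - 1, by omega⟩
    rw [Finset.sum_range_succ', Delta_zero, Xc_sum a η ha, Finset.sum_range_succ', Rkl_zero]
    simp only [Delta_succ _ _ (shift_pos a ha l), shift_shift]
    push_cast
    simp only [Finset.mul_sum]
    rw [Finset.sum_comm]
    have hI : Finset.Icc 1 m = (Finset.range m).image (· + 1) := by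
      ext x; simp only [Finset.mem_Icc, Finset.mem_image, Finset.mem_range]
      constructor
      · intro h; exact ⟨x - 1, by omega, by omega⟩
      · rintro ⟨y, hy, rfl⟩; omega
    rw [hI, Finset.sum_image (by intro x _ y _ h; simpa using h)]
    have : ∀ k ∈ Finset.range m, ∑ r ∈ Finset.range N, (-(Complex.I * t)) ^ (r + 1) *
        ((Rkl (shift a l) (shift η l) 1 (k + 1) : ℂ) *
          (Delta (shift a (l + (k + 1))) (shift η (l + (k + 1))) r (m - (k + 1)) : ℂ))
        = -(Complex.I * t) * ((Rkl (shift a l) (shift η l) 1 (k + 1) : ℂ) *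
            Xc a η t (m - (k + 1)) (l + (k + 1))) := by
      intro k hk
      rw [Finset.mem_range] at hk
      rw [← ih (m - (k + 1)) (by omega) (l + (k + 1)) N (by omega), Finset.mul_sum, Finset.mul_sum]
      refine Finset.sum_congr rfl fun r _ => ?_
      ring
    rw [Finset.sum_congr rfl this, ← Finset.mul_sum]
    ring

lemma K_antidiag (D : ℕ → ℝ) (r : ℕ) :
    ∑ p ∈ Finset.Icc (-(r : ℤ)) (r : ℤ),
      (-1 : ℝ) ^ p * D ((r : ℤ) + p).toNat * D ((r : ℤ) - p).toNat
    = (-1) ^ r * ∑ x ∈ Finset.HasAntidiagonal.antidiagonal (2 * r), ((-1) ^ x.1 * D x.1) * D x.2 := by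
  rw [Finset.mul_sum]
  refine Finset.sum_bij' (fun p _ => (((r : ℤ) + p).toNat, ((r : ℤ) - p).toNat))
    (fun x _ => (x.1 : ℤ) - r) ?_ ?_ ?_ ?_ ?_
  · intro p hp
    rw [Finset.mem_Icc] at hp
    rw [Finset.HasAntidiagonal.mem_antidiagonal]
    omega
  · rintro ⟨i, j⟩ hx
    rw [Finset.HasAntidiagonal.mem_antidiagonal] at hx
    rw [Finset.mem_Icc]
    simp only at hx ⊢
    omega
  · intro p hp
    rw [Finset.mem_Icc] at hp
    simp only
    omega
  · rintro ⟨i, j⟩ hx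
    rw [Finset.HasAntidiagonal.mem_antidiagonal] at hx
    simp only [Prod.mk.injEq] at hx ⊢
    omega
  · intro p hp
    rw [Finset.mem_Icc] at hp
    simp only
    obtain ⟨q, hq⟩ : ∃ q : ℕ, (r : ℤ) + p = q := ⟨((r : ℤ) + p).toNat, by omega⟩
    have hp' : p = (q : ℤ) - r := by omega
    have h1 : (-1 : ℝ) ^ p = (-1) ^ r * (-1) ^ q := by
      rw [hp', zpow_sub₀ (by norm_num), zpow_natCast, zpow_natCast, div_eq_iff (by simp)]
      have : ((-1 : ℝ) ^ r) * (-1) ^ r = 1 := by rw [← mul_pow]; simp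
      linear_combination -(-1 : ℝ) ^ q * this
    rw [h1, hq]
    simp only [Int.toNat_natCast]
    ring

lemma sum_even_odd (f : ℕ → ℝ) (N : ℕ) :
    ∑ n ∈ Finset.range (2 * N), f n = ∑ r ∈ Finset.range N, (f (2 * r) + f (2 * r + 1)) := by
  induction N with
  | zero => simp
  | succ N ih =>
    rw [show 2 * (N + 1) = 2 * N + 1 + 1 by ring, Finset.sum_range_succ, Finset.sum_range_succ, ih,
      Finset.sum_range_succ]
    ring

open Polynomial in
lemma normSq_sum (D : ℕ → ℝ) (N : ℕ) (hD : ∀ r, N ≤ r → D r = 0) (t : ℝ) :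
    Complex.normSq (∑ r ∈ Finset.range N, (-(Complex.I * t)) ^ r * (D r : ℂ))
      = ∑ r ∈ Finset.range N, t ^ (2 * r) * ∑ p ∈ Finset.Icc (-(r : ℤ)) (r : ℤ),
      (-1 : ℝ) ^ p * D ((r : ℤ) + p).toNat * D ((r : ℤ) - p).toNat := by
  rcases Nat.eq_zero_or_pos N with rfl | hN
  · simp
  set P : ℝ[X] := ∑ r ∈ Finset.range N, monomial r (D r) with hP
  set Q : ℝ[X] := ∑ r ∈ Finset.range N, monomial r ((-1) ^ r * D r) with hQ
  have cP : ∀ r, P.coeff r = D r := by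
    intro r
    simp only [hP, finsetSum_coeff, coeff_monomial, Finset.sum_ite_eq', Finset.mem_range]
    split_ifs with h
    · rfl
    · exact (hD r (by omega)).symm
  have cQ : ∀ r, Q.coeff r = (-1) ^ r * D r := by
    intro r
    simp only [hQ, finsetSum_coeff, coeff_monomial, Finset.sum_ite_eq', Finset.mem_range]
    split_ifs with h
    · rfl
    · rw [hD r (by omega), mul_zero]
  have dP : P.natDegree ≤ N - 1 := by
    rw [natDegree_le_iff_coeff_eq_zero]
    intro n hn
    rw [cP, hD n (by omega)]
  have dQ : Q.natDegree ≤ N - 1 := by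
    rw [natDegree_le_iff_coeff_eq_zero]
    intro n hn
    rw [cQ, hD n (by omega), mul_zero]
  have dPQ : (Q * P).natDegree < 2 * N := by
    have := natDegree_mul_le (p := Q) (q := P)
    omega
  have eQ : aeval (Complex.I * t) Q
      = ∑ r ∈ Finset.range N, (-(Complex.I * t)) ^ r * (D r : ℂ) := by
    rw [hQ, map_sum]
    refine Finset.sum_congr rfl fun r _ => ?_
    rw [aeval_monomial, neg_pow]
    simp
    ring
  have eP : aeval (Complex.I * t) P
      = (starRingEnd ℂ) (∑ r ∈ Finset.range N, (-(Complex.I * t)) ^ r * (D r : ℂ)) := by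
    rw [hP, map_sum, map_sum]
    refine Finset.sum_congr rfl fun r _ => ?_
    rw [aeval_monomial]
    simp
    ring
  have key := aeval_eq_sum_range' dPQ (Complex.I * (t : ℂ))
  rw [map_mul, eP, eQ, Complex.mul_conj] at key
  have key2 := congrArg Complex.re key
  rw [Complex.ofReal_re, Complex.re_sum, sum_even_odd] at key2
  rw [key2]
  refine Finset.sum_congr rfl fun r _ => ?_
  have h1 : (Complex.I * (t : ℂ)) ^ (2 * r) = (((-1) ^ r * t ^ (2 * r) : ℝ) : ℂ) := by
    rw [mul_pow, pow_mul, Complex.I_sq]; push_cast; rfl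
  rw [K_antidiag, pow_succ, h1, coeff_mul]
  simp only [cP, cQ, Complex.real_smul]
  rw [← Complex.ofReal_mul, Complex.ofReal_re, ← mul_assoc, ← mul_assoc]
  rw [← Complex.ofReal_mul, Complex.re_ofReal_mul]
  simp
  ring

lemma Xc_normSq (a η : ℕ → ℝ) (ha : ∀ k : ℕ, 1 ≤ k → 0 < a k) (t : ℝ) (m l N : ℕ) (h : m < N) :
    Complex.normSq (Xc a η t m l)
      = ∑ r ∈ Finset.range N, t ^ (2 * r) * Kr (shift a l) (shift η l) r m := by
  rw [← Xc_Delta a η ha t m l N h]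
  exact normSq_sum (fun r => Delta (shift a l) (shift η l) r m) N
    (fun r hr => Delta_eq_zero r _ _ (shift_pos a ha l) m (by omega)) t

lemma main_ind (a η : ℕ → ℝ) (ha : ∀ k : ℕ, 1 ≤ k → 0 < a k) (t : ℝ) (n : ℕ) (y : ℕ → ℂ)
    (hy : ∀ l, l < n → y l = betaC a η t (l + 1) * y (l + 1) - (a (l + 2) : ℂ) * y (l + 2))
    (S : ℕ → ℝ) (hS : ∀ m, S m = ∑ k ∈ Finset.Icc 1 m, Rkl a η 1 k) (m : ℕ) (hm : m ≤ n) :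
    a 1 * (y 1 * star (y 0)).im =
      t * ∑ l ∈ Finset.Icc 1 m, (2 * S l - Rkl a η 1 l) * rho a l
          * Complex.normSq (y l - (a (l + 1) : ℂ) * y (l + 1))
        + rho a (m + 1) * (y (m + 1) * star (y m)).im
        - t * (-2 * rho a (m + 1) * S m * (y m * star (y (m + 1))).re
          + (2 * S m - Rkl a η 1 m) * rho a m * a (m + 1) ^ 2 * Complex.normSq (y (m + 1))) := by
  induction m with
  | zero => simp [hS, Rkl_zero, rho_zero, rho_succ]
  | succ m ih =>
    rw [ih (by omega), Finset.sum_Icc_succ_top (by omega)]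
    have e : S (m + 1) = S m + Rkl a η 1 (m + 1) := by
      rw [hS, hS, Finset.sum_Icc_succ_top (by omega)]
    rw [e, Rkl_succ a η ha, rho_succ a (m + 1), rho_succ a m, hy m (by omega)]
    simp only [betaC, Complex.normSq_apply, Complex.star_def, Complex.mul_re, Complex.mul_im,
      Complex.sub_re, Complex.sub_im, Complex.conj_re, Complex.conj_im, Complex.ofReal_re,
      Complex.ofReal_im, Complex.I_re, Complex.I_im]
    ring

/-- `Im(A n · conj (B n)) = ∑_{r=0}^{n-1} t^{2r+1} N_r(n)` with
`N_r(n) = ∑_{1≤k≤l≤n} R_1^k 2^{(k,l)} ρ l · θ^l K_r(n-l)`. -/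
theorem stmt_17
    (a η : ℕ → ℝ) (ha : ∀ k : ℕ, 1 ≤ k → 0 < a k) (t : ℝ)
    (B : ℤ → ℂ) (hBm : B (-1) = 0) (hB0 : B 0 = 1)
    (hB : ∀ n : ℕ, 1 ≤ n →
      B (n : ℤ) = (((1 + a n : ℝ) : ℂ) - Complex.I * (t : ℂ) * ((η n : ℝ) : ℂ)) * B ((n : ℤ) - 1)
        - ((a n : ℝ) : ℂ) * B ((n : ℤ) - 2))
    (A : ℤ → ℂ) (hA0 : A 0 = 0) (hA1 : A 1 = ((a 1 : ℝ) : ℂ))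
    (hA : ∀ n : ℕ, 2 ≤ n →
      A (n : ℤ) = (((1 + a n : ℝ) : ℂ) - Complex.I * (t : ℂ) * ((η n : ℝ) : ℂ)) * A ((n : ℤ) - 1)
        - ((a n : ℝ) : ℂ) * A ((n : ℤ) - 2)) :
    ∀ n : ℕ, 1 ≤ n →
      (A (n : ℤ) * star (B (n : ℤ))).im =
        ∑ r ∈ Finset.range n, t ^ (2 * r + 1) *
          ∑ l ∈ Finset.Icc 1 n, ∑ k ∈ Finset.Icc 1 l,
            Rkl a η 1 k * (if k = l then (1 : ℝ) else 2) * rho a l *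
              Kr (shift a l) (shift η l) r (n - l) := by
  intro n hn
  have hBY : ∀ m : ℕ, B (m : ℤ) = Yc a η t m 0 ∧ B ((m : ℤ) + 1) = Yc a η t (m + 1) 0 := by
    intro m
    induction m with
    | zero =>
      refine ⟨by simpa [Yc] using hB0, ?_⟩
      have := hB 1 le_rfl
      norm_num [hBm, hB0] at this
      simp only [Nat.cast_zero, zero_add, Yc, betaC]
      rw [this]
      push_cast
      ring
    | succ m ih =>
      refine ⟨by push_cast; exact ih.2, ?_⟩
      have := hB (m + 2) (by omega)
      rw [show ((m + 2 : ℕ) : ℤ) - 1 = (m : ℤ) + 1 by push_cast; ring,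
        show ((m + 2 : ℕ) : ℤ) - 2 = (m : ℤ) by push_cast; ring, ih.1, ih.2] at this
      rw [show ((m + 1 : ℕ) : ℤ) + 1 = ((m + 2 : ℕ) : ℤ) by push_cast; ring, this, Yc_back]
      simp only [zero_add, betaC]
  have hAY : ∀ m : ℕ, A ((m : ℤ) + 1) = a 1 * Yc a η t m 1 ∧
      A ((m : ℤ) + 2) = a 1 * Yc a η t (m + 1) 1 := by
    intro m
    induction m with
    | zero =>
      refine ⟨by simpa [Yc] using hA1, ?_⟩
      have := hA 2 le_rfl
      norm_num [hA1, hA0] at this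
      simp only [Nat.cast_zero, zero_add, Yc, betaC]
      rw [this]
      push_cast
      ring
    | succ m ih =>
      refine ⟨by rw [← ih.2]; push_cast; ring_nf, ?_⟩
      have := hA (m + 3) (by omega)
      rw [show ((m + 3 : ℕ) : ℤ) - 1 = (m : ℤ) + 2 by push_cast; ring,
        show ((m + 3 : ℕ) : ℤ) - 2 = (m : ℤ) + 1 by push_cast; ring, ih.1, ih.2] at this
      rw [show ((m + 1 : ℕ) : ℤ) + 2 = ((m + 3 : ℕ) : ℤ) by push_cast; ring, this, Yc_back,
        show 1 + m + 2 = m + 3 by ring]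
      simp only [betaC]
      ring
  set y : ℕ → ℂ := fun l => if l ≤ n then Yc a η t (n - l) l else 0 with hy
  have hyrec : ∀ l, l < n →
      y l = betaC a η t (l + 1) * y (l + 1) - (a (l + 2) : ℂ) * y (l + 2) := by
    intro l hl
    simp only [hy]
    rw [if_pos hl.le, if_pos (by omega)]
    by_cases h : l + 2 ≤ n
    · rw [if_pos h]
      obtain ⟨k, rfl⟩ : ∃ k, n = l + 2 + k := ⟨n - (l + 2), by omega⟩
      rw [show l + 2 + k - l = k + 2 by omega, show l + 2 + k - (l + 1) = k + 1 by omega,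
        show l + 2 + k - (l + 2) = k by omega, Yc]
    · rw [if_neg h, show n - l = 1 by omega, show n - (l + 1) = 0 by omega]
      simp [Yc]
  have hyX : ∀ l, l ≤ n → y l - (a (l + 1) : ℂ) * y (l + 1) = Xc a η t (n - l) l := by
    intro l hl
    simp only [hy]
    rw [if_pos hl]
    by_cases h : l + 1 ≤ n
    · rw [if_pos h]
      obtain ⟨k, rfl⟩ : ∃ k, n = l + 1 + k := ⟨n - (l + 1), by omega⟩
      rw [show l + 1 + k - l = k + 1 by omega, show l + 1 + k - (l + 1) = k by omega, Xc]
    · rw [if_neg h, show n - l = 0 by omega]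
      simp [Yc, Xc]
  have hmain := main_ind a η ha t n y hyrec (fun m => ∑ k ∈ Finset.Icc 1 m, Rkl a η 1 k)
    (fun _ => rfl) n le_rfl
  have hyn : y (n + 1) = 0 := by simp [hy]
  have hy0 : y 0 = B n := by rw [(hBY n).1]; simp [hy]
  have hy1 : (a 1 : ℂ) * y 1 = A n := by
    have := (hAY (n - 1)).1
    rw [show ((n - 1 : ℕ) : ℤ) + 1 = n by omega] at this
    rw [this]
    simp [hy, hn]
  rw [hyn] at hmain
  have hl : (A (n : ℤ) * star (B (n : ℤ))).im = a 1 * (y 1 * star (y 0)).im := by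
    rw [← hy1, ← hy0, mul_assoc, Complex.im_ofReal_mul]
  rw [hl, hmain]
  simp only [star_zero, mul_zero, zero_mul, Complex.zero_im, Complex.zero_re, map_zero, add_zero,
    sub_zero]
  simp only [Finset.mul_sum]
  rw [Finset.sum_comm]
  refine Finset.sum_congr rfl fun l hl => ?_
  rw [Finset.mem_Icc] at hl
  rw [hyX l hl.2, Xc_normSq a η ha t (n - l) l n (by omega)]
  have hc : 2 * ∑ k ∈ Finset.Icc 1 l, Rkl a η 1 k - Rkl a η 1 l
      = ∑ k ∈ Finset.Icc 1 l, Rkl a η 1 k * (if k = l then (1 : ℝ) else 2) := by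
    obtain ⟨k, rfl⟩ : ∃ k, l = k + 1 := ⟨l - 1, by omega⟩
    rw [Finset.sum_Icc_succ_top (by omega), Finset.sum_Icc_succ_top (by omega)]
    have : ∀ j ∈ Finset.Icc 1 k, Rkl a η 1 j * (if j = k + 1 then (1 : ℝ) else 2)
        = 2 * Rkl a η 1 j := by
      intro j hj
      rw [Finset.mem_Icc] at hj
      rw [if_neg (by omega), mul_comm]
    rw [Finset.sum_congr rfl this, ← Finset.mul_sum, if_pos rfl]
    ring
  rw [← Finset.mul_sum, hc, Finset.mul_sum, Finset.mul_sum]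
  refine Finset.sum_congr rfl fun r _ => ?_
  rw [← Finset.mul_sum, ← Finset.sum_mul, ← Finset.sum_mul]
  ring
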